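/- Let k be a field of characteristic zero and let f₁, f₂ ∈ S = k[x₁,…,xₙ] both have degree j, with deg(f₁ − f₂) ≤ j − a for some a ≥ 1. Let Δ and Δ' be the Hilbert function decompositions of the apolar algebras T/Ann(f₁) and T/Ann(f₂) respectively. Then Δ_m(t) = Δ'_m(t) for all m ≤ a − 1 and all t. -/

import Mathlib

/-- `dim_k P/(P ∩ Q)`, the `k`-dimension of the image of the submodule `P` in `A/Q`. -/
noncomputable def subquotDim (k : Type*) {A : Type*} [Field k] [CommRing A] [Algebra k A]
    (P Q : Submodule A A) : ℕ :=
  Module.finrank k (↥(P.restrictScalars k) ⧸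
    (Submodule.comap (P.restrictScalars k).subtype (Q.restrictScalars k)))

/-- Iarrobino's `A_{m,n} = J^m ∩ (0 : J^n)`, with the convention `J^i = A` for `i ≤ 0`. -/
noncomputable def iaA {A : Type*} [CommRing A] (J : Ideal A) (m : ℕ) (n : ℤ) : Ideal A :=
  J ^ m ⊓ Submodule.torsionBySet A A ((J ^ n.toNat : Ideal A) : Set A)

/-- `dim_k Q_{m,n}` where `Q_{m,n} = A_{m,n}/(A_{m+1,n} + A_{m,n-1})`. -/
noncomputable def iaQdim (k : Type*) {A : Type*} [Field k] [CommRing A] [Algebra k A]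
    (J : Ideal A) (m : ℕ) (n : ℤ) : ℕ :=
  subquotDim k (iaA J m n) (iaA J (m + 1) n ⊔ iaA J m (n - 1))

/-- The Hilbert function decomposition `Δ_s(t) = dim_k Q_{t, j+1-(s+t)}` for `0 ≤ s ≤ j`,
`0 ≤ t ≤ j - s`, and `Δ_s(t) = 0` otherwise. -/
noncomputable def iaDelta (k : Type*) {A : Type*} [Field k] [CommRing A] [Algebra k A]
    (J : Ideal A) (j s t : ℕ) : ℕ :=
  if s ≤ j ∧ s + t ≤ j then iaQdim k J t ((j : ℤ) + 1 - (s + t)) else 0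

/-- The local Hilbert function `h(t) = dim_k J^t/J^(t+1)`. -/
noncomputable def hilbFn (k : Type*) {A : Type*} [Field k] [CommRing A] [Algebra k A]
    (J : Ideal A) (t : ℕ) : ℕ :=
  subquotDim k (J ^ t) (J ^ (t + 1))

/-- The apolarity action of `T = k[y₁,…,yₙ]` on `S = k[x₁,…,xₙ]`, in which `yᵢ` acts as
`∂/∂xᵢ`. -/
noncomputable def apolar {k : Type*} [CommSemiring k] {n : ℕ}
    (D f : MvPolynomial (Fin n) k) : MvPolynomial (Fin n) k :=
  ∑ a ∈ D.support, ∑ b ∈ f.support,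
    MvPolynomial.monomial (b - a)
      (D.coeff a * f.coeff b * ∏ i : Fin n, ((b i).descFactorial (a i) : k))

/-!
Lift Iarrobino's ideals from `A = T/I` to `T`: `A_{m,n}` is the image of `M^m ∩ (I : M^n)`, and
`I` contributes nothing to the quotient `Q_{m,n}`, which may therefore be computed in `T`. Whether
an element of `M^m` lies in `(I : M^n)` depends only on `I ∩ M^(m+n)`, so `Q_{m,n}` depends only on
`I ∩ M^N` as soon as `N < m + n`. An operator of order greater than `deg (f₁ - f₂)` kills
`f₁ - f₂`, so the apolar ideals of `f₁` and `f₂` agree on `M^(j-m)` when `deg (f₁ - f₂) < j - m`,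
and `j - m < t + (j + 1 - (m + t))` is the bound needed for `Δ_m(t)`.
-/

section Lift

variable {T : Type*} [CommRing T]

/-- The ideal `M^m ∩ (I : M^n)` of `T`, whose image in `T/I` is Iarrobino's `A_{m,n}` for the image
of `M`; as in `iaA`, negative `n` is treated as `0`. -/
def iaLift (I M : Ideal T) (m : ℕ) (n : ℤ) : Ideal T :=
  M ^ m ⊓ I.colon ((M ^ n.toNat : Ideal T) : Set T)

theorem mem_iaLift {I M : Ideal T} {m : ℕ} {n : ℤ} {x : T} :
    x ∈ iaLift I M m n ↔ x ∈ M ^ m ∧ ∀ y ∈ M ^ n.toNat, x * y ∈ I := by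
  simp only [iaLift, Submodule.mem_inf, Submodule.mem_colon, SetLike.mem_coe, smul_eq_mul]

theorem iaLift_mono (I M : Ideal T) {m m' : ℕ} {n n' : ℤ} (hm : m' ≤ m) (hn : n ≤ n') :
    iaLift I M m n ≤ iaLift I M m' n' :=
  inf_le_inf (Ideal.pow_le_pow_right hm)
    (Submodule.colon_mono le_rfl (Ideal.pow_le_pow_right (Int.toNat_le_toNat hn)))

theorem iaLift_inf_le (I M : Ideal T) (m : ℕ) (n n' : ℤ) :
    iaLift I M m n ⊓ I ≤ iaLift I M m n' :=
  le_inf (inf_le_left.trans inf_le_left) (inf_le_right.trans Ideal.le_colon)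

theorem iaLift_congr {I₁ I₂ M : Ideal T} {N m : ℕ} {n : ℤ} (h : I₁ ⊓ M ^ N = I₂ ⊓ M ^ N)
    (hN : N ≤ m + n.toNat) : iaLift I₁ M m n = iaLift I₂ M m n := by
  ext x
  simp only [mem_iaLift]
  refine and_congr_right fun hx => forall₂_congr fun y hy => ?_
  have hxy : x * y ∈ M ^ N :=
    Ideal.pow_le_pow_right hN (pow_add M m n.toNat ▸ Ideal.mul_mem_mul hx hy)
  simpa only [Submodule.mem_inf, hxy, and_true] using SetLike.ext_iff.1 h (x * y)

theorem comap_torsionBySet_map_mk (I L : Ideal T) :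
    Ideal.comap (Ideal.Quotient.mk I) (Submodule.torsionBySet (T ⧸ I) (T ⧸ I)
      (L.map (Ideal.Quotient.mk I) : Set (T ⧸ I))) = I.colon (L : Set T) := by
  ext x
  rw [Ideal.map, ← Submodule.torsionBySet_eq_torsionBySet_span]
  simp only [Ideal.mem_comap, Submodule.mem_torsionBySet_iff, Submodule.mem_colon,
    Subtype.forall, Set.forall_mem_image, SetLike.mem_coe, smul_eq_mul, ← map_mul,
    Ideal.Quotient.eq_zero_iff_mem, mul_comm x]

theorem map_inf_eq_map_inf_comap_of_surjective {A B : Type*} [Semiring A] [Semiring B]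
    (φ : A →+* B) (hφ : Function.Surjective φ) (P : Ideal A) (Q : Ideal B) :
    P.map φ ⊓ Q = (P ⊓ Q.comap φ).map φ := by
  ext y
  simp only [Submodule.mem_inf, Ideal.mem_map_iff_of_surjective φ hφ, Ideal.mem_comap]
  constructor
  · rintro ⟨⟨x, hx, rfl⟩, hy⟩
    exact ⟨x, ⟨hx, hy⟩, rfl⟩
  · rintro ⟨x, ⟨hx, hy⟩, rfl⟩
    exact ⟨⟨x, hx, rfl⟩, hy⟩

theorem iaA_map_mk (I M : Ideal T) (m : ℕ) (n : ℤ) :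
    iaA (M.map (Ideal.Quotient.mk I)) m n = (iaLift I M m n).map (Ideal.Quotient.mk I) := by
  rw [iaA, iaLift, ← Ideal.map_pow, ← Ideal.map_pow,
    map_inf_eq_map_inf_comap_of_surjective _ Ideal.Quotient.mk_surjective,
    comap_torsionBySet_map_mk]

end Lift

section Dimension

variable (k : Type*) [Field k]

theorem subquotDim_map {A B : Type*} [CommRing A] [CommRing B] [Algebra k A] [Algebra k B]
    (φ : A →ₐ[k] B) (hφ : Function.Surjective φ) {P Q : Ideal A}
    (h : P ⊓ (Q ⊔ RingHom.ker φ) ≤ Q) :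
    subquotDim k (P.map φ) (Q.map φ) = subquotDim k P Q := by
  let g : P.restrictScalars k →ₗ[k] (P.map φ).restrictScalars k :=
    φ.toLinearMap.restrict fun _ hx => Ideal.mem_map_of_mem φ hx
  have hg : Function.Surjective g := by
    rintro ⟨y, hy⟩
    obtain ⟨x, hx, rfl⟩ := (Ideal.mem_map_iff_of_surjective φ hφ).1 hy
    exact ⟨⟨x, hx⟩, rfl⟩
  let N := ((Q.map φ).restrictScalars k).comap ((P.map φ).restrictScalars k).subtype
  have hker : LinearMap.ker (N.mkQ ∘ₗ g) =
      (Q.restrictScalars k).comap (P.restrictScalars k).subtype := by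
    rw [LinearMap.ker_comp, Submodule.ker_mkQ]
    ext ⟨x, hx⟩
    change x ∈ (Q.map φ).comap φ ↔ x ∈ Q
    rw [Ideal.comap_map_of_surjective' φ hφ]
    exact ⟨fun hxQ => h ⟨hx, hxQ⟩, fun hxQ => Ideal.mem_sup_left hxQ⟩
  have e := LinearMap.quotKerEquivOfSurjective (N.mkQ ∘ₗ g) ((Submodule.mkQ_surjective N).comp hg)
  rw [hker] at e
  exact e.symm.finrank_eq

variable {T : Type*} [CommRing T] [Algebra k T]

theorem iaQdim_map_mk (I M : Ideal T) (m : ℕ) (n : ℤ) :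
    iaQdim k (M.map (Ideal.Quotient.mk I)) m n =
      subquotDim k (iaLift I M m n) (iaLift I M (m + 1) n ⊔ iaLift I M m (n - 1)) := by
  rw [iaQdim, iaA_map_mk, iaA_map_mk, iaA_map_mk, ← Ideal.map_sup]
  refine subquotDim_map k (Ideal.Quotient.mkₐ k I) (Ideal.Quotient.mkₐ_surjective k I) ?_
  have hle : iaLift I M (m + 1) n ⊔ iaLift I M m (n - 1) ≤ iaLift I M m n :=
    sup_le (iaLift_mono I M m.le_succ le_rfl) (iaLift_mono I M le_rfl (by lia))
  have hker : RingHom.ker (Ideal.Quotient.mkₐ k I) = I := Ideal.Quotient.mkₐ_ker k I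
  rw [hker, inf_comm, sup_inf_assoc_of_le I hle, inf_comm]
  exact sup_le le_rfl ((iaLift_inf_le I M m n (n - 1)).trans le_sup_right)

theorem iaQdim_map_mk_congr {I₁ I₂ M : Ideal T} {N m : ℕ} {n : ℤ}
    (h : I₁ ⊓ M ^ N = I₂ ⊓ M ^ N) (hN : (N : ℤ) < m + n) :
    iaQdim k (M.map (Ideal.Quotient.mk I₁)) m n =
      iaQdim k (M.map (Ideal.Quotient.mk I₂)) m n := by
  rw [iaQdim_map_mk, iaQdim_map_mk, iaLift_congr h (by lia), iaLift_congr h (by lia),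
    iaLift_congr h (by lia)]

end Dimension

section Apolarity

open MvPolynomial

variable {n : ℕ}

theorem apolar_eq_sum {k : Type*} [CommSemiring k] (D f : MvPolynomial (Fin n) k) :
    apolar D f = ∑ a ∈ D.support, (AddMonoidAlgebra.coeff f).sum fun b c =>
      monomial (b - a) (D.coeff a * c * ∏ i, ((b i).descFactorial (a i) : k)) :=
  rfl

theorem apolar_sub {k : Type*} [CommRing k] (D f g : MvPolynomial (Fin n) k) :
    apolar D (f - g) = apolar D f - apolar D g := by
  simp only [apolar_eq_sum, ← Finset.sum_sub_distrib, AddMonoidAlgebra.coeff_sub]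
  refine Finset.sum_congr rfl fun a _ => Finsupp.sum_sub_index fun b c d => ?_
  rw [mul_sub, sub_mul, map_sub]

theorem apolar_eq_zero_of_mem_pow_idealOfVars {k : Type*} [CommSemiring k]
    {D g : MvPolynomial (Fin n) k} {N : ℕ} (hD : D ∈ idealOfVars (Fin n) k ^ N)
    (hg : g.totalDegree < N) : apolar D g = 0 := by
  refine Finset.sum_eq_zero fun a ha => Finset.sum_eq_zero fun b hb => ?_
  have hdeg : b.degree < a.degree :=
    (le_totalDegree hb).trans_lt (hg.trans_le ((mem_pow_idealOfVars_iff N D).1 hD a ha))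
  obtain ⟨i, hi⟩ : ∃ i, b i < a i := by
    by_contra! hab
    exact hdeg.not_ge (Finsupp.degree_mono hab)
  have hi₀ : ((b i).descFactorial (a i) : k) = 0 := by
    rw [Nat.descFactorial_eq_zero_iff_lt.2 hi, Nat.cast_zero]
  rw [Finset.prod_eq_zero (Finset.mem_univ i) hi₀, mul_zero, map_zero]

theorem inf_pow_idealOfVars_eq_of_totalDegree_sub_lt {k : Type*} [CommRing k]
    {f₁ f₂ : MvPolynomial (Fin n) k} {I₁ I₂ : Ideal (MvPolynomial (Fin n) k)}
    (hI₁ : (I₁ : Set (MvPolynomial (Fin n) k)) = {D | apolar D f₁ = 0})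
    (hI₂ : (I₂ : Set (MvPolynomial (Fin n) k)) = {D | apolar D f₂ = 0})
    {N : ℕ} (hN : (f₁ - f₂).totalDegree < N) :
    I₁ ⊓ idealOfVars (Fin n) k ^ N = I₂ ⊓ idealOfVars (Fin n) k ^ N := by
  ext D
  refine and_congr_left fun hD => ?_
  have hD₁₂ : apolar D f₁ = apolar D f₂ := by
    rw [← sub_eq_zero, ← apolar_sub, apolar_eq_zero_of_mem_pow_idealOfVars hD hN]
  rw [hI₁, hI₂, Set.mem_ofPred_eq, Set.mem_ofPred_eq, hD₁₂]

theorem totalDegree_eq_of_totalDegree_sub_lt {σ k : Type*} [CommRing k] {f g : MvPolynomial σ k}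
    (h : (f - g).totalDegree < f.totalDegree) : g.totalDegree = f.totalDegree := by
  rw [← totalDegree_neg (f - g)] at h
  simpa only [neg_sub, add_sub_cancel] using totalDegree_add_eq_left_of_totalDegree_lt h

theorem deformations_stmt15_general {k : Type*} [Field k] {f₁ f₂ : MvPolynomial (Fin n) k} {m : ℕ}
    (hm : f₁ - f₂ = 0 ∨ (f₁ - f₂).totalDegree + m < f₁.totalDegree)
    {I₁ I₂ : Ideal (MvPolynomial (Fin n) k)}
    (hI₁ : (I₁ : Set (MvPolynomial (Fin n) k)) = {D | apolar D f₁ = 0})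
    (hI₂ : (I₂ : Set (MvPolynomial (Fin n) k)) = {D | apolar D f₂ = 0}) (t : ℕ) :
    iaDelta k ((idealOfVars (Fin n) k).map (Ideal.Quotient.mk I₁)) f₁.totalDegree m t =
      iaDelta k ((idealOfVars (Fin n) k).map (Ideal.Quotient.mk I₂)) f₂.totalDegree m t := by
  rcases hm with heq | hlt
  · obtain rfl := sub_eq_zero.1 heq
    obtain rfl := SetLike.coe_injective (hI₁.trans hI₂.symm)
    rfl
  · have hI := inf_pow_idealOfVars_eq_of_totalDegree_sub_lt hI₁ hI₂ (Nat.lt_sub_of_add_lt hlt)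
    have hdeg : f₂.totalDegree = f₁.totalDegree :=
      totalDegree_eq_of_totalDegree_sub_lt (Nat.lt_of_add_right_lt hlt)
    rw [hdeg, iaDelta, iaDelta, iaQdim_map_mk_congr k hI (by lia)]

end Apolarity

/-- Let `k` be a field of characteristic zero and `f₁, f₂ ∈ k[x₁,…,xₙ]`
both of degree `j`, with `deg(f₁ - f₂) ≤ j - a` for some `a ≥ 1`. Let `Δ` and `Δ'` be the
Hilbert function decompositions of the apolar algebras `T/Ann(f₁)` and `T/Ann(f₂)`.
Then `Δ_m(t) = Δ'_m(t)` for all `m ≤ a - 1` and all `t`. -/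
theorem deformations_stmt15 {k : Type*} [Field k] [CharZero k] {n : ℕ}
    (j a : ℕ) (ha : 1 ≤ a)
    (f₁ f₂ : MvPolynomial (Fin n) k)
    (hdeg₁ : f₁.totalDegree = j) (hdeg₂ : f₂.totalDegree = j)
    -- deg (f₁ - f₂) ≤ j - a  (as integers; the zero polynomial has degree -∞)
    (hdiff : f₁ - f₂ = 0 ∨ ((f₁ - f₂).totalDegree : ℤ) ≤ (j : ℤ) - (a : ℤ))
    -- I₁, I₂ are the apolar ideals Ann(f₁), Ann(f₂)
    (I₁ I₂ : Ideal (MvPolynomial (Fin n) k))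
    (hI₁ : (I₁ : Set (MvPolynomial (Fin n) k)) = {D | apolar D f₁ = 0})
    (hI₂ : (I₂ : Set (MvPolynomial (Fin n) k)) = {D | apolar D f₂ = 0}) :
    -- the Hilbert function decompositions (w.r.t. the maximal ideals of the apolar
    -- algebras, i.e. the images of (y₁,…,yₙ)) agree in rows m ≤ a - 1
    ∀ m t : ℕ, m ≤ a - 1 →
      iaDelta k (Ideal.map (Ideal.Quotient.mk I₁)
          (Ideal.span (Set.range (MvPolynomial.X : Fin n → MvPolynomial (Fin n) k)))) j m t =
      iaDelta k (Ideal.map (Ideal.Quotient.mk I₂)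
          (Ideal.span (Set.range (MvPolynomial.X : Fin n → MvPolynomial (Fin n) k)))) j m t := by
  intro m t hm
  simpa only [hdeg₁, hdeg₂] using
    deformations_stmt15_general (hdiff.imp_right fun h => by lia) hI₁ hI₂ t
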